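/- Let L = { a + b·ω : a, b ∈ ℤ } ⊂ ℂ with ω = exp(iπ/3) be the triangular lattice, so that each v ∈ L has the six neighbors v + ω^k, k = 0,…,5, in cyclic order. For ρ : L → (0,∞) define the angle sum Θ_ρ(v) = Σ_{k=0}^{5} arccos( 1 − 2ρ(v+ω^k)ρ(v+ω^{k+1}) / ((ρ(v)+ρ(v+ω^k))(ρ(v)+ρ(v+ω^{k+1}))) ), indices k taken mod 6. If ρ, ρ̃ : L → (0,∞) satisfy Θ_ρ(v) = Θ_{ρ̃}(v) for every v ∈ L, then either both ratio functions v ↦ ρ̃(v)/ρ(v) and v ↦ ρ(v)/ρ̃(v) are unbounded, or both are constant. -/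

import Mathlib

open Real Set

/-- `ω = exp(iπ/3)`, a primitive sixth root of unity. -/
noncomputable def hexω : ℂ := Complex.exp ((Real.pi / 3 : ℂ) * Complex.I)

/-- The triangular lattice `L = {a + b·ω : a, b ∈ ℤ} ⊂ ℂ`. -/
def hexLattice : Set ℂ := {z | ∃ a b : ℤ, z = (a : ℂ) + (b : ℂ) * hexω}

/-- The angle sum of the label `ρ` at a vertex `v` of the triangular lattice:
the neighbors of `v` are `v + ω^k`, `k = 0, …, 5`, in cyclic order. -/
noncomputable def hexAngleSum (ρ : ℂ → ℝ) (v : ℂ) : ℝ :=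
  ∑ k ∈ Finset.range 6,
    Real.arccos (1 - 2 * ρ (v + hexω ^ k) * ρ (v + hexω ^ (k + 1)) /
      ((ρ v + ρ (v + hexω ^ k)) * (ρ v + ρ (v + hexω ^ (k + 1)))))

/-!
Move from `ρ` to `σ` along the path of labels whose logarithms vary linearly. The derivative of the
angle at `x` in a triangle of mutually tangent circles with respect to `log y` is
`√(x y z / (x + y + z)) / (x + y)`, which is symmetric in `x` and `y`, and the angle only depends on
the ratios of the radii. Integrating along the path therefore writes the difference of the angle
sums as the Laplacian of `log (σ / ρ)` for a network on the triangular lattice, whose conductances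
are positive and bounded by `1`. So `log (σ / ρ)` is harmonic for this network; if it is bounded
above, subtracting it from a constant gives a positive harmonic function. The network is recurrent,
by logarithmic cutoffs, since spheres in the lattice grow linearly, and Picone's identity shows that
positive superharmonic functions on a recurrent network are constant along edges.
-/

section RadialCutoff

/-- The radial profile of the logarithmic cutoff of radius `R`, with harmonic numbers in place of
logarithms: it falls from `1` at `0` to `0` at `R`, and the step from `n` to `n + 1` is proportional
to `1 / (n + 1)`. -/
noncomputable def radialCutoff (R n : ℕ) : ℝ := 1 - harmonic (min n R) / harmonic R

lemma tendsto_harmonic_atTop : Filter.Tendsto (fun n => (harmonic n : ℝ)) .atTop .atTop :=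
  Filter.tendsto_atTop_mono log_add_one_le_harmonic <|
    tendsto_log_atTop.comp <| tendsto_natCast_atTop_atTop.comp <| Filter.tendsto_add_atTop_nat 1

lemma harmonic_nonneg (n : ℕ) : 0 ≤ harmonic n := Finset.sum_nonneg fun _ _ => by positivity

lemma harmonic_succ_le_two_mul {R : ℕ} (hR : R ≠ 0) : harmonic (R + 1) ≤ 2 * harmonic R := by
  obtain ⟨m, rfl⟩ := Nat.exists_eq_succ_of_ne_zero hR
  have hinv : ((m + 1 + 1 : ℕ) : ℚ)⁻¹ ≤ ((m + 1 : ℕ) : ℚ)⁻¹ := by gcongr; lia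
  have hnonneg := harmonic_nonneg m
  rw [harmonic_succ (m + 1), harmonic_succ m]
  linarith

lemma radialCutoff_zero (R : ℕ) : radialCutoff R 0 = 1 := by simp [radialCutoff]

lemma radialCutoff_eq_zero {R n : ℕ} (hR : R ≠ 0) (hn : R ≤ n) : radialCutoff R n = 0 := by
  have hH : (harmonic R : ℝ) ≠ 0 := mod_cast (harmonic_pos hR).ne'
  rw [radialCutoff, min_eq_right hn, div_self hH, sub_self]

lemma abs_radialCutoff_sub_succ_le (R n : ℕ) :
    |radialCutoff R n - radialCutoff R (n + 1)| ≤ 1 / (n + 1) / harmonic R := by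
  have hH : (0 : ℝ) ≤ harmonic R := mod_cast harmonic_nonneg R
  rcases le_or_gt R n with hn | hn
  · rw [radialCutoff, radialCutoff, min_eq_right hn, min_eq_right (by lia), sub_self, abs_zero]
    positivity
  · have hstep : radialCutoff R n - radialCutoff R (n + 1) = 1 / (n + 1) / harmonic R := by
      rw [radialCutoff, radialCutoff, min_eq_left hn.le, min_eq_left hn, harmonic_succ]
      push_cast
      ring
    rw [hstep, abs_of_nonneg (by positivity)]

lemma radialCutoff_sub_sq_le (R : ℕ) {n m : ℕ} (hnm : n ≤ m + 1) (hmn : m ≤ n + 1) :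
    (radialCutoff R n - radialCutoff R m) ^ 2 ≤ (2 / (n + 1) / harmonic R) ^ 2 := by
  have hH : (0 : ℝ) ≤ harmonic R := mod_cast harmonic_nonneg R
  refine sq_le_sq.2 (le_abs.2 (.inl ?_))
  obtain rfl | rfl | rfl : m = n ∨ m = n + 1 ∨ n = m + 1 := by lia
  · rw [sub_self, abs_zero]
    positivity
  · refine (abs_radialCutoff_sub_succ_le R n).trans ?_
    gcongr
    norm_num
  · rw [abs_sub_comm]
    refine (abs_radialCutoff_sub_succ_le R m).trans ?_
    gcongr ?_ / _
    rw [div_le_div_iff₀ (by positivity) (by positivity)]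
    push_cast
    linarith

lemma sum_range_mul_step_sq_le {A : ℝ} (hA : 0 ≤ A) {R : ℕ} (hR : R ≠ 0) :
    ∑ n ∈ Finset.range (R + 1), A * (n + 1) * (2 / (n + 1) / harmonic R) ^ 2 ≤
      8 * A / harmonic R := by
  have hH : (0 : ℝ) < harmonic R := mod_cast harmonic_pos hR
  have hsucc : (harmonic (R + 1) : ℝ) ≤ 2 * harmonic R := mod_cast harmonic_succ_le_two_mul hR
  calc ∑ n ∈ Finset.range (R + 1), A * (n + 1) * (2 / (n + 1) / harmonic R) ^ 2
      = 4 * A / harmonic R ^ 2 * harmonic (R + 1) := by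
        simp only [harmonic, Rat.cast_sum, Finset.mul_sum]
        refine Finset.sum_congr rfl fun n _ => ?_
        push_cast
        field_simp
        norm_num
    _ ≤ 4 * A / harmonic R ^ 2 * (2 * harmonic R) := by gcongr
    _ = 8 * A / harmonic R := by
        field_simp
        ring

lemma sum_radial_le_sum_range {V : Type*} {δ : V → ℕ} {sphere : ℕ → Finset V} {A : ℝ}
    (hsphere : ∀ v, v ∈ sphere (δ v))
    (hcard : ∀ n, ((sphere n).card : ℝ) ≤ A * (n + 1)) {g : ℕ → ℝ} (hg : ∀ n, 0 ≤ g n) {R : ℕ}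
    {B : Finset V} (hB : ∀ v ∈ B, δ v < R) :
    ∑ v ∈ B, g (δ v) ≤ ∑ n ∈ Finset.range R, A * (n + 1) * g n := by
  rw [← Finset.sum_fiberwise_of_maps_to fun v hv => Finset.mem_range.2 (hB v hv)]
  refine Finset.sum_le_sum fun n _ => ?_
  have hfiber : (B.filter (δ · = n)).card ≤ (sphere n).card :=
    Finset.card_le_card fun v hv => (Finset.mem_filter.1 hv).2 ▸ hsphere v
  calc ∑ v ∈ B with δ v = n, g (δ v)
      = (B.filter (δ · = n)).card * g n := by
        rw [Finset.sum_congr rfl fun v hv => by rw [(Finset.mem_filter.1 hv).2], Finset.sum_const,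
          nsmul_eq_mul]
    _ ≤ A * (n + 1) * g n := by
        refine mul_le_mul_of_nonneg_right ?_ (hg n)
        exact (Nat.cast_le.2 hfiber).trans (hcard n)

end RadialCutoff

/-- The sup-norm distance on `ℤ²`. -/
def supDist (x v : ℤ × ℤ) : ℕ := max (v.1 - x.1).natAbs (v.2 - x.2).natAbs

lemma supDist_le_supDist_add (x v u : ℤ × ℤ) : supDist x u ≤ supDist x v + supDist v u := by
  simp only [supDist]
  lia

lemma card_box_le (n : ℕ) : (Finset.box n : Finset (ℤ × ℤ)).card ≤ 8 * (n + 1) := by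
  rcases eq_or_ne n 0 with rfl | hn
  · simp
  · rw [Int.card_box hn]
    lia

lemma picone_identity {a b : ℝ} (ha : a ≠ 0) (hb : b ≠ 0) (p q : ℝ) :
    (p ^ 2 / a - q ^ 2 / b) * (b - a) = (p * b - q * a) ^ 2 / (a * b) - (p - q) ^ 2 := by
  field_simp
  ring

/-- An electrical network: symmetric nonnegative conductances on pairs of vertices, locally finite
in the sense that `nbr v` contains every vertex joined to `v` by a nonzero conductance. -/
structure Network (V : Type*) where
  cond : V → V → ℝ
  nbr : V → Finset V
  cond_nonneg : ∀ v u, 0 ≤ cond v u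
  cond_symm : ∀ v u, cond v u = cond u v
  mem_nbr_of_cond_ne_zero : ∀ v u, cond v u ≠ 0 → u ∈ nbr v

namespace Network

section Recurrence

variable {V : Type*} (N : Network V)

/-- The network Laplacian. -/
def laplacian (f : V → ℝ) (v : V) : ℝ := ∑ u ∈ N.nbr v, N.cond v u * (f u - f v)

/-- A superharmonic function on a network. -/
def IsSuperharmonic (f : V → ℝ) : Prop := ∀ v, N.laplacian f v ≤ 0

/-- The Dirichlet energy of `φ` over the edges inside the finite set `B`, each edge being counted
once in each direction. -/
def energyOn (B : Finset V) (φ : V → ℝ) : ℝ :=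
  ∑ v ∈ B, ∑ u ∈ B, N.cond v u * (φ v - φ u) ^ 2

/-- Recurrence of a network, in the form that every vertex has zero capacity: finitely supported
functions taking the value `1` at that vertex have arbitrarily small Dirichlet energy. -/
def IsRecurrent : Prop :=
  ∀ x, ∀ ε > 0, ∃ φ : V → ℝ, φ.support.Finite ∧ φ x = 1 ∧ ∀ B, N.energyOn B φ ≤ ε

variable {N}

lemma sum_cond_mul_eq_laplacian {B : Finset V} {v : V} (hB : N.nbr v ⊆ B) (f : V → ℝ) :
    ∑ u ∈ B, N.cond v u * (f u - f v) = N.laplacian f v := by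
  refine (Finset.sum_subset hB fun u _ hu => ?_).symm
  rw [not_imp_comm.1 (N.mem_nbr_of_cond_ne_zero v u) hu, zero_mul]

lemma green_identity (B : Finset V) (ψ f : V → ℝ) :
    ∑ v ∈ B, ∑ u ∈ B, N.cond v u * ((ψ v - ψ u) * (f u - f v)) =
      2 * ∑ v ∈ B, ψ v * ∑ u ∈ B, N.cond v u * (f u - f v) := by
  have swap : ∑ v ∈ B, ∑ u ∈ B, N.cond v u * (ψ u * (f v - f u)) =
      ∑ v ∈ B, ∑ u ∈ B, N.cond v u * (ψ v * (f u - f v)) := by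
    rw [Finset.sum_comm]
    simp only [N.cond_symm]
  calc ∑ v ∈ B, ∑ u ∈ B, N.cond v u * ((ψ v - ψ u) * (f u - f v))
      = ∑ v ∈ B, ∑ u ∈ B, N.cond v u * (ψ v * (f u - f v)) +
          ∑ v ∈ B, ∑ u ∈ B, N.cond v u * (ψ u * (f v - f u)) := by
        simp only [← Finset.sum_add_distrib]
        exact Finset.sum_congr rfl fun v _ => Finset.sum_congr rfl fun u _ => by ring
    _ = 2 * ∑ v ∈ B, ∑ u ∈ B, N.cond v u * (ψ v * (f u - f v)) := by rw [swap, two_mul]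
    _ = 2 * ∑ v ∈ B, ψ v * ∑ u ∈ B, N.cond v u * (f u - f v) := by
        simp only [Finset.mul_sum, mul_left_comm]

-- The superharmonic inequality is tested against `φ ^ 2 / w`.
lemma sum_picone_le_energyOn {B : Finset V} {φ w : V → ℝ} (hw : ∀ v, 0 < w v)
    (hsuper : N.IsSuperharmonic w) (hB : ∀ v, φ v ≠ 0 → N.nbr v ⊆ B) :
    ∑ v ∈ B, ∑ u ∈ B, N.cond v u * ((φ v * w u - φ u * w v) ^ 2 / (w v * w u)) ≤
      N.energyOn B φ := by
  have test_nonpos : ∑ v ∈ B, φ v ^ 2 / w v * ∑ u ∈ B, N.cond v u * (w u - w v) ≤ 0 := by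
    refine Finset.sum_nonpos fun v _ => ?_
    by_cases hv : φ v = 0
    · simp [hv]
    · rw [sum_cond_mul_eq_laplacian (hB v hv)]
      exact mul_nonpos_of_nonneg_of_nonpos (div_nonneg (sq_nonneg _) (hw v).le) (hsuper v)
  have expand :
      ∑ v ∈ B, ∑ u ∈ B, N.cond v u * ((φ v ^ 2 / w v - φ u ^ 2 / w u) * (w u - w v)) =
        ∑ v ∈ B, ∑ u ∈ B, N.cond v u * ((φ v * w u - φ u * w v) ^ 2 / (w v * w u)) -
          N.energyOn B φ := by
    simp only [picone_identity (hw _).ne' (hw _).ne', mul_sub, Finset.sum_sub_distrib, energyOn]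
  have green := green_identity (N := N) B (fun v => φ v ^ 2 / w v) w
  linarith

lemma cond_mul_le_sum {B : Finset V} {g : V → V → ℝ} (hg : ∀ v u, 0 ≤ g v u) {x y : V}
    (hx : x ∈ B) (hy : y ∈ B) :
    N.cond x y * g x y ≤ ∑ v ∈ B, ∑ u ∈ B, N.cond v u * g v u := by
  have hterm (v u : V) : 0 ≤ N.cond v u * g v u := mul_nonneg (N.cond_nonneg v u) (hg v u)
  exact (Finset.single_le_sum (fun u _ => hterm x u) hy).trans
    (Finset.single_le_sum (f := fun v => ∑ u ∈ B, N.cond v u * g v u)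
      (fun v _ => Finset.sum_nonneg fun u _ => hterm v u) hx)

lemma IsRecurrent.cond_mul_sq_le (hN : N.IsRecurrent) {w : V → ℝ} (hw : ∀ v, 0 < w v)
    (hsuper : N.IsSuperharmonic w) (x y : V) {ε : ℝ} (hε : 0 < ε) :
    N.cond x y * (w y - w x) ^ 2 ≤ ε * (2 * (w x * w y + w x ^ 2)) := by
  classical
  obtain ⟨φ, hfin, hφx, henergy⟩ := hN x ε hε
  let B : Finset V := {x, y} ∪ hfin.toFinset.biUnion N.nbr
  have hx : x ∈ B := by simp [B]
  have hy : y ∈ B := by simp [B]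
  have hB (v : V) (hv : φ v ≠ 0) : N.nbr v ⊆ B :=
    (Finset.subset_biUnion_of_mem N.nbr (by simpa using hv)).trans Finset.subset_union_right
  have picone : N.cond x y * ((w y - φ y * w x) ^ 2 / (w x * w y)) ≤ ε := by
    have hle := (cond_mul_le_sum (g := fun v u => (φ v * w u - φ u * w v) ^ 2 / (w v * w u))
      (fun v u => div_nonneg (sq_nonneg _) (mul_pos (hw v) (hw u)).le) hx hy).trans
        ((sum_picone_le_energyOn hw hsuper hB).trans (henergy B))
    simpa only [hφx, one_mul] using hle
  have dirichlet : N.cond x y * (1 - φ y) ^ 2 ≤ ε := by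
    have hle := (cond_mul_le_sum (g := fun v u => (φ v - φ u) ^ 2)
      (fun _ _ => sq_nonneg _) hx hy).trans (henergy B)
    simpa only [hφx] using hle
  rw [← mul_div_assoc, div_le_iff₀ (mul_pos (hw x) (hw y))] at picone
  calc N.cond x y * (w y - w x) ^ 2
      = N.cond x y * ((w y - φ y * w x) - (1 - φ y) * w x) ^ 2 := by ring
    _ ≤ N.cond x y * (2 * ((w y - φ y * w x) ^ 2 + ((1 - φ y) * w x) ^ 2)) := by
        gcongr
        · exact N.cond_nonneg x y
        · simpa only [← sub_eq_add_neg, even_two.neg_pow] using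
            add_sq_le (a := w y - φ y * w x) (b := -((1 - φ y) * w x))
    _ = 2 * (N.cond x y * (w y - φ y * w x) ^ 2 + N.cond x y * (1 - φ y) ^ 2 * w x ^ 2) := by ring
    _ ≤ 2 * (ε * (w x * w y) + ε * w x ^ 2) := by gcongr
    _ = ε * (2 * (w x * w y + w x ^ 2)) := by ring

theorem IsRecurrent.eq_of_isSuperharmonic_of_pos (hN : N.IsRecurrent) {w : V → ℝ}
    (hw : ∀ v, 0 < w v) (hsuper : N.IsSuperharmonic w) {x y : V} (hxy : N.cond x y ≠ 0) :
    w y = w x := by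
  have hK : 0 < 2 * (w x * w y + w x ^ 2) := by have := hw x; have := hw y; positivity
  have hle : N.cond x y * (w y - w x) ^ 2 ≤ 0 := by
    refine le_of_forall_pos_le_add fun δ hδ => ?_
    simpa only [div_mul_cancel₀ δ hK.ne', zero_add] using
      hN.cond_mul_sq_le hw hsuper x y (div_pos hδ hK)
  have hzero := le_antisymm hle (mul_nonneg (N.cond_nonneg x y) (sq_nonneg _))
  exact sub_eq_zero.1 (pow_eq_zero_iff two_ne_zero |>.1 ((mul_eq_zero_iff_left hxy).1 hzero))

end Recurrence

section LinearGrowth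

variable {V : Type*} {N : Network V} {δ : V → ℕ} {sphere : ℕ → Finset V} {A M : ℝ}

lemma energyOn_radialCutoff_le (hstep : ∀ v u, N.cond v u ≠ 0 → δ u ≤ δ v + 1)
    (hsphere : ∀ v, v ∈ sphere (δ v)) (hcard : ∀ n, ((sphere n).card : ℝ) ≤ A * (n + 1))
    (hdeg : ∀ v B, ∑ u ∈ B, N.cond v u ≤ M) (hM : 0 ≤ M) {R : ℕ} (hR : R ≠ 0) (B : Finset V) :
    N.energyOn B (fun v => radialCutoff R (δ v)) ≤ 8 * (M * A) / harmonic R := by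
  have hA : 0 ≤ A := by simpa using (Nat.cast_nonneg _).trans (hcard 0)
  let g : ℕ → ℝ := fun n => M * (2 / (n + 1) / harmonic R) ^ 2
  have hrow (v : V) : ∑ u ∈ B, N.cond v u * (radialCutoff R (δ v) - radialCutoff R (δ u)) ^ 2 ≤
      if δ v < R + 1 then g (δ v) else 0 := by
    split_ifs with hv
    · refine le_trans ?_ (mul_le_mul_of_nonneg_right (hdeg v B) (sq_nonneg _))
      rw [Finset.sum_mul]
      refine Finset.sum_le_sum fun u _ => ?_
      by_cases hvu : N.cond v u = 0
      · simp [hvu]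
      · exact mul_le_mul_of_nonneg_left (radialCutoff_sub_sq_le R
          (hstep u v (N.cond_symm v u ▸ hvu)) (hstep v u hvu)) (N.cond_nonneg v u)
    · refine (Finset.sum_eq_zero fun u _ => ?_).le
      by_cases hvu : N.cond v u = 0
      · simp [hvu]
      · have hvu' := hstep u v (N.cond_symm v u ▸ hvu)
        rw [radialCutoff_eq_zero hR (by lia), radialCutoff_eq_zero hR (by lia)]
        simp
  calc N.energyOn B (fun v => radialCutoff R (δ v))
      ≤ ∑ v ∈ B, if δ v < R + 1 then g (δ v) else 0 := Finset.sum_le_sum fun v _ => hrow v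
    _ = ∑ v ∈ B with δ v < R + 1, g (δ v) := (Finset.sum_filter _ _).symm
    _ ≤ ∑ n ∈ Finset.range (R + 1), A * (n + 1) * g n :=
        sum_radial_le_sum_range hsphere hcard (fun n => by positivity) (by simp)
    _ = ∑ n ∈ Finset.range (R + 1), M * A * (n + 1) * (2 / (n + 1) / harmonic R) ^ 2 :=
        Finset.sum_congr rfl fun n _ => by simp only [g]; ring
    _ ≤ 8 * (M * A) / harmonic R := sum_range_mul_step_sq_le (mul_nonneg hM hA) hR

theorem isRecurrent_of_linear_growth {δ : V → V → ℕ} {sphere : V → ℕ → Finset V}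
    (hself : ∀ x, δ x x = 0) (hstep : ∀ x v u, N.cond v u ≠ 0 → δ x u ≤ δ x v + 1)
    (hsphere : ∀ x v, v ∈ sphere x (δ x v))
    (hcard : ∀ x n, ((sphere x n).card : ℝ) ≤ A * (n + 1))
    (hdeg : ∀ v B, ∑ u ∈ B, N.cond v u ≤ M) : N.IsRecurrent := by
  classical
  intro x ε hε
  have hM : 0 ≤ M := by simpa using hdeg x ∅
  obtain ⟨R, hRlarge, hR⟩ := ((tendsto_harmonic_atTop.eventually_ge_atTop (8 * (M * A) / ε)).and
    (Filter.eventually_ne_atTop 0)).exists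
  refine ⟨fun v => radialCutoff R (δ x v), ?_, ?_, fun B => ?_⟩
  · refine ((Finset.range R).biUnion (sphere x)).finite_toSet.subset fun v hv => ?_
    have hvR : δ x v < R := not_le.1 fun hle => hv (radialCutoff_eq_zero hR hle)
    exact Finset.mem_biUnion.2 ⟨δ x v, Finset.mem_range.2 hvR, hsphere x v⟩
  · simp only [hself, radialCutoff_zero]
  · have hH : (0 : ℝ) < harmonic R := mod_cast harmonic_pos hR
    refine (energyOn_radialCutoff_le (hstep x) (hsphere x) (hcard x) hdeg hM hR B).trans ?_
    rwa [div_le_comm₀ hH hε]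

end LinearGrowth

theorem isRecurrent_of_supDist_le_one {N : Network (ℤ × ℤ)} {M : ℝ}
    (hrange : ∀ v u, N.cond v u ≠ 0 → supDist v u ≤ 1)
    (hdeg : ∀ v B, ∑ u ∈ B, N.cond v u ≤ M) : N.IsRecurrent := by
  refine isRecurrent_of_linear_growth (A := 8) (δ := supDist)
    (sphere := fun x n => (Finset.box n).map (addLeftEmbedding x)) ?_ ?_ ?_ ?_ hdeg
  · simp [supDist]
  · exact fun x v u hvu => (supDist_le_supDist_add x v u).trans (by gcongr; exact hrange v u hvu)
  · exact fun x v => Finset.mem_map.2 ⟨v - x, Int.mem_box.2 rfl, by simp⟩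
  · intro x n
    rw [Finset.card_map]
    exact_mod_cast card_box_le n

section Translation

variable {G ι : Type*} [AddGroup G] [DecidableEq G] [Fintype ι]

/-- The network on a group in which `v` is joined to `v + d k` with conductance `C v k`,
where `d` is a symmetric family of directions and `rev k` is the index of `-d k`. -/
def ofDirections (d : ι → G) (rev : ι ≃ ι) (hrev : ∀ k, d (rev k) = -d k) (C : G → ι → ℝ)
    (hC : ∀ v k, 0 ≤ C v k) (hsymm : ∀ v k, C (v + d k) (rev k) = C v k) : Network G where
  cond v u := ∑ k, if u = v + d k then C v k else 0
  nbr v := Finset.univ.image (v + d ·)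
  cond_nonneg v u := Finset.sum_nonneg fun k _ => by split_ifs; exacts [hC v k, le_rfl]
  cond_symm v u := by
    refine (Finset.sum_congr rfl fun k _ => ?_).trans
      (rev.sum_comp fun k => if v = u + d k then C u k else 0)
    have hiff : v = u + d (rev k) ↔ u = v + d k := by
      rw [hrev, ← sub_eq_add_neg, eq_sub_iff_add_eq, eq_comm]
    simp only [hiff]
    split_ifs with huv
    · rw [huv, hsymm]
    · rfl
  mem_nbr_of_cond_ne_zero v u hvu := by
    obtain ⟨k, -, hk⟩ := Finset.exists_ne_zero_of_sum_ne_zero hvu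
    exact Finset.mem_image.2 ⟨k, Finset.mem_univ k, (ite_ne_right_iff.1 hk).1.symm⟩

variable {d : ι → G} {rev : ι ≃ ι} {hrev : ∀ k, d (rev k) = -d k} {C : G → ι → ℝ}
  {hC : ∀ v k, 0 ≤ C v k} {hsymm : ∀ v k, C (v + d k) (rev k) = C v k}

lemma exists_eq_add_of_ofDirections_cond_ne_zero {v u : G}
    (hvu : (ofDirections d rev hrev C hC hsymm).cond v u ≠ 0) : ∃ k, u = v + d k := by
  simpa [eq_comm, ofDirections] using
    (ofDirections d rev hrev C hC hsymm).mem_nbr_of_cond_ne_zero v u hvu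

lemma le_ofDirections_cond (v : G) (k : ι) :
    C v k ≤ (ofDirections d rev hrev C hC hsymm).cond v (v + d k) := by
  refine le_of_eq_of_le (by rw [if_pos rfl]) (Finset.single_le_sum
    (f := fun j => if v + d k = v + d j then C v j else 0) (fun j _ => ?_) (Finset.mem_univ k))
  split_ifs
  exacts [hC v j, le_rfl]

lemma sum_ofDirections_cond_le (v : G) (B : Finset G) :
    ∑ u ∈ B, (ofDirections d rev hrev C hC hsymm).cond v u ≤ ∑ k, C v k := by
  simp only [ofDirections]
  rw [Finset.sum_comm]
  refine Finset.sum_le_sum fun k _ => ?_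
  rw [Finset.sum_ite_eq']
  split_ifs
  exacts [le_rfl, hC v k]

lemma laplacian_ofDirections (f : G → ℝ) (v : G) :
    (ofDirections d rev hrev C hC hsymm).laplacian f v = ∑ k, C v k * (f (v + d k) - f v) := by
  simp only [laplacian, ofDirections, Finset.sum_mul, ite_mul, zero_mul]
  rw [Finset.sum_comm]
  refine Finset.sum_congr rfl fun k _ => ?_
  rw [Finset.sum_ite_eq', if_pos (Finset.mem_image_of_mem _ (Finset.mem_univ k))]

end Translation

end Network

section PetalAngle

/-- The angle at the center of the circle of radius `x` in the triangle formed by the centers of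
three mutually tangent circles of radii `x`, `y`, `z`. -/
noncomputable def petalAngle (x y z : ℝ) : ℝ := arccos (1 - 2 * y * z / ((x + y) * (x + z)))

/-- The inradius of the triangle formed by the centers of three mutually tangent circles of radii
`x`, `y`, `z`. -/
noncomputable def inradius (x y z : ℝ) : ℝ := √(x * y * z / (x + y + z))

/-- The partial derivative of `petalAngle x y z` with respect to `log y`. It is symmetric in `x` and
`y`, which makes it a conductance of the edge joining the two circles. -/
noncomputable def angleWeight (x y z : ℝ) : ℝ := inradius x y z / (x + y)

lemma angleWeight_comm (x y z : ℝ) : angleWeight x y z = angleWeight y x z := by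
  rw [angleWeight, angleWeight, inradius, inradius, mul_comm x y, add_comm x y]

lemma inradius_right_comm (x y z : ℝ) : inradius x y z = inradius x z y := by
  rw [inradius, inradius, mul_right_comm, add_right_comm]

variable {x y z : ℝ}

lemma inradius_pos (hx : 0 < x) (hy : 0 < y) (hz : 0 < z) : 0 < inradius x y z := by
  unfold inradius
  positivity

lemma inradius_sq_mul (hx : 0 < x) (hy : 0 < y) (hz : 0 < z) :
    inradius x y z ^ 2 * (x + y + z) = x * y * z := by
  rw [inradius, sq_sqrt (by positivity), div_mul_cancel₀ _ (by positivity)]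

lemma angleWeight_pos (hx : 0 < x) (hy : 0 < y) (hz : 0 < z) : 0 < angleWeight x y z :=
  div_pos (inradius_pos hx hy hz) (add_pos hx hy)

lemma angleWeight_le_half (hx : 0 < x) (hy : 0 < y) (hz : 0 < z) : angleWeight x y z ≤ 1 / 2 := by
  have hsq : x * y * z / (x + y + z) ≤ (1 / 2 * (x + y)) ^ 2 := by
    rw [div_le_iff₀ (by positivity)]
    calc x * y * z ≤ x * y * (x + y + z) := by gcongr; linarith
      _ ≤ (1 / 2 * (x + y)) ^ 2 * (x + y + z) := by
          gcongr
          linarith [four_mul_le_sq_add x y]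
  rw [angleWeight, div_le_iff₀ (by positivity)]
  exact sqrt_le_iff.2 ⟨by positivity, hsq⟩

lemma sqrt_one_sub_cos_petalAngle_sq (hx : 0 < x) (hy : 0 < y) (hz : 0 < z) :
    √(1 - (1 - 2 * y * z / ((x + y) * (x + z))) ^ 2) =
      2 * inradius x y z * (x + y + z) / ((x + y) * (x + z)) := by
  have hr := inradius_pos hx hy hz
  rw [sqrt_eq_iff_mul_self_eq_of_pos (by positivity)]
  calc 2 * inradius x y z * (x + y + z) / ((x + y) * (x + z)) *
        (2 * inradius x y z * (x + y + z) / ((x + y) * (x + z)))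
      = 4 * (inradius x y z ^ 2 * (x + y + z)) * (x + y + z) / ((x + y) * (x + z)) ^ 2 := by
        field_simp
        ring
    _ = 1 - (1 - 2 * y * z / ((x + y) * (x + z))) ^ 2 := by
        rw [inradius_sq_mul hx hy hz]
        field_simp
        ring

variable {X Y Z : ℝ → ℝ} {a b c t : ℝ}

lemma hasDerivAt_cos_petalAngle (hX : HasDerivAt X (X t * a) t) (hY : HasDerivAt Y (Y t * b) t)
    (hZ : HasDerivAt Z (Z t * c) t) (hXt : 0 < X t) (hYt : 0 < Y t) (hZt : 0 < Z t) :
    HasDerivAt (fun t => 1 - 2 * Y t * Z t / ((X t + Y t) * (X t + Z t)))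
      (-(2 * X t * Y t * Z t / ((X t + Y t) * (X t + Z t)) *
        ((b - a) / (X t + Y t) + (c - a) / (X t + Z t)))) t := by
  refine ((((hY.const_mul 2).mul hZ).div
    ((hX.add hY).mul (hX.add hZ)) ?_).const_sub 1).congr_deriv ?_
  · simp only [Pi.mul_apply, Pi.add_apply]
    positivity
  · simp only [Pi.mul_apply, Pi.add_apply]
    field_simp
    ring

lemma hasDerivAt_petalAngle (hX : HasDerivAt X (X t * a) t) (hY : HasDerivAt Y (Y t * b) t)
    (hZ : HasDerivAt Z (Z t * c) t) (hXt : 0 < X t) (hYt : 0 < Y t) (hZt : 0 < Z t) :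
    HasDerivAt (fun t => petalAngle (X t) (Y t) (Z t))
      (angleWeight (X t) (Y t) (Z t) * (b - a) + angleWeight (X t) (Z t) (Y t) * (c - a)) t := by
  have hcos_ne_one : 1 - 2 * Y t * Z t / ((X t + Y t) * (X t + Z t)) ≠ 1 := by
    have : 0 < 2 * Y t * Z t / ((X t + Y t) * (X t + Z t)) := by positivity
    linarith
  have hcos_ne_neg_one : 1 - 2 * Y t * Z t / ((X t + Y t) * (X t + Z t)) ≠ -1 := by
    have : 2 * Y t * Z t / ((X t + Y t) * (X t + Z t)) < 2 := by
      rw [div_lt_iff₀ (by positivity)]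
      nlinarith [mul_pos hXt hYt, mul_pos hXt hZt, mul_pos hXt hXt]
    linarith
  have hr := inradius_pos hXt hYt hZt
  refine ((hasDerivAt_arccos hcos_ne_neg_one hcos_ne_one).comp t
    (hasDerivAt_cos_petalAngle hX hY hZ hXt hYt hZt)).congr_deriv ?_
  rw [sqrt_one_sub_cos_petalAngle_sq hXt hYt hZt, angleWeight, angleWeight,
    inradius_right_comm (X t) (Z t)]
  have hXYZ : 2 * X t * Y t * Z t =
      2 * (inradius (X t) (Y t) (Z t) ^ 2 * (X t + Y t + Z t)) := by
    rw [inradius_sq_mul hXt hYt hZt]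
    ring
  rw [hXYZ]
  field_simp

end PetalAngle

section LogInterpolation

variable {V : Type*} (r s : V → ℝ)

/-- The path of labels from `r` (at `t = 0`) to `s` (at `t = 1`) along which every logarithm
`log (label v)` moves linearly. -/
noncomputable def logInterp (t : ℝ) (v : V) : ℝ := r v * exp (t * log (s v / r v))

/-- The average of `angleWeight` along `logInterp r s`, for the edge `p q` of the triangle
`p q m`. -/
noncomputable def meanWeight (p q m : V) : ℝ :=
  ∫ t in (0 : ℝ)..1, angleWeight (logInterp r s t p) (logInterp r s t q) (logInterp r s t m)

lemma meanWeight_comm (p q m : V) : meanWeight r s p q m = meanWeight r s q p m := by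
  simp only [meanWeight, angleWeight_comm (logInterp r s _ p)]

lemma logInterp_zero (v : V) : logInterp r s 0 v = r v := by simp [logInterp]

variable {r s}

lemma logInterp_one {v : V} (hr : 0 < r v) (hs : 0 < s v) : logInterp r s 1 v = s v := by
  rw [logInterp, one_mul, exp_log (div_pos hs hr), mul_div_cancel₀ _ hr.ne']

lemma logInterp_pos (hr : ∀ v, 0 < r v) (t : ℝ) (v : V) : 0 < logInterp r s t v :=
  mul_pos (hr v) (exp_pos _)

lemma hasDerivAt_logInterp (v : V) (t : ℝ) :
    HasDerivAt (logInterp r s · v) (logInterp r s t v * log (s v / r v)) t := by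
  simpa only [logInterp, one_mul, mul_assoc] using
    (((hasDerivAt_id' t).mul_const (log (s v / r v))).exp).const_mul (r v)

lemma continuous_angleWeight_logInterp (hr : ∀ v, 0 < r v) (p q m : V) :
    Continuous fun t =>
      angleWeight (logInterp r s t p) (logInterp r s t q) (logInterp r s t m) := by
  have hcont (v : V) : Continuous (logInterp r s · v) :=
    continuous_iff_continuousAt.2 fun t => (hasDerivAt_logInterp v t).continuousAt
  have hpos := logInterp_pos (s := s) hr
  unfold angleWeight inradius
  refine .div (.sqrt (.div (by fun_prop) (by fun_prop) fun t => ?_)) (by fun_prop) fun t => ?_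
  · exact (add_pos (add_pos (hpos t p) (hpos t q)) (hpos t m)).ne'
  · exact (add_pos (hpos t p) (hpos t q)).ne'

lemma meanWeight_pos (hr : ∀ v, 0 < r v) (p q m : V) : 0 < meanWeight r s p q m :=
  intervalIntegral.intervalIntegral_pos_of_pos
    ((continuous_angleWeight_logInterp hr p q m).intervalIntegrable _ _)
    (fun t => angleWeight_pos (logInterp_pos hr t p) (logInterp_pos hr t q) (logInterp_pos hr t m))
    one_pos

lemma meanWeight_le_half (hr : ∀ v, 0 < r v) (p q m : V) : meanWeight r s p q m ≤ 1 / 2 :=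
  calc meanWeight r s p q m ≤ ∫ _ in (0 : ℝ)..1, (1 / 2 : ℝ) :=
        intervalIntegral.integral_mono_on zero_le_one
          ((continuous_angleWeight_logInterp hr p q m).intervalIntegrable _ _)
          (continuous_const.intervalIntegrable _ _) fun t _ =>
            angleWeight_le_half (logInterp_pos hr t p) (logInterp_pos hr t q)
              (logInterp_pos hr t m)
    _ = 1 / 2 := by simp

lemma petalAngle_sub_petalAngle (hr : ∀ v, 0 < r v) (hs : ∀ v, 0 < s v) (p q m : V) :
    petalAngle (s p) (s q) (s m) - petalAngle (r p) (r q) (r m) =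
      meanWeight r s p q m * (log (s q / r q) - log (s p / r p)) +
        meanWeight r s p m q * (log (s m / r m) - log (s p / r p)) := by
  have hq := ((continuous_angleWeight_logInterp (s := s) hr p q m).mul_const
    (log (s q / r q) - log (s p / r p))).intervalIntegrable (μ := MeasureTheory.volume) 0 1
  have hm := ((continuous_angleWeight_logInterp (s := s) hr p m q).mul_const
    (log (s m / r m) - log (s p / r p))).intervalIntegrable (μ := MeasureTheory.volume) 0 1
  have ftc := intervalIntegral.integral_eq_sub_of_hasDerivAt (fun t _ => hasDerivAt_petalAngle
    (hasDerivAt_logInterp p t) (hasDerivAt_logInterp q t) (hasDerivAt_logInterp m t)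
    (logInterp_pos hr t p) (logInterp_pos hr t q) (logInterp_pos hr t m)) (hq.add hm)
  simp only [logInterp_zero, logInterp_one (hr _) (hs _)] at ftc
  rw [← ftc, intervalIntegral.integral_add hq hm, intervalIntegral.integral_mul_const,
    intervalIntegral.integral_mul_const, meanWeight, meanWeight]

end LogInterpolation

section HexCoordinates

/-- The coordinates, in the basis `1, ω`, of the six neighbors `ω ^ k` of `0` in the triangular
lattice. -/
def hexDir : ZMod 6 → ℤ × ℤ := ![(1, 0), (0, 1), (-1, 1), (-1, 0), (0, -1), (1, -1)]

lemma hexDir_add_three : ∀ k, hexDir (k + 3) = -hexDir k := by decide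

lemma hexDir_add_hexDir_add_two : ∀ k, hexDir k + hexDir (k + 2) = hexDir (k + 1) := by decide

/-- The point of the triangular lattice with coordinates `v` in the basis `1, ω`. -/
noncomputable def hexPoint : ℤ × ℤ →+ ℂ :=
  (Int.castAddHom ℂ).coprod ((AddMonoidHom.mulRight hexω).comp (Int.castAddHom ℂ))

lemma hexPoint_apply (v : ℤ × ℤ) : hexPoint v = v.1 + v.2 * hexω := rfl

lemma hexPoint_mem_hexLattice (v : ℤ × ℤ) : hexPoint v ∈ hexLattice := ⟨v.1, v.2, rfl⟩

lemma forall_mem_hexLattice {P : ℂ → Prop} : (∀ z ∈ hexLattice, P z) ↔ ∀ v, P (hexPoint v) := by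
  refine ⟨fun h v => h _ (hexPoint_mem_hexLattice v), ?_⟩
  rintro h _ ⟨a, b, rfl⟩
  exact h (a, b)

lemma hexω_sq : hexω ^ 2 = hexω - 1 := by
  have hexp : hexω = Complex.exp (2 * π * Complex.I / (6 : ℕ)) := by
    rw [hexω]
    push_cast
    ring_nf
  have hprim : IsPrimitiveRoot hexω 6 := hexp ▸ Complex.isPrimitiveRoot_exp 6 (by norm_num)
  have hroot : hexω ^ 2 - hexω + 1 = 0 := by
    simpa [Polynomial.cyclotomic_six] using hprim.isRoot_cyclotomic (by norm_num)
  linear_combination hroot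

lemma hexPoint_hexDir (k : ℕ) : hexPoint (hexDir k) = hexω ^ k := by
  induction k using Nat.twoStepInduction with
  | zero => simp [hexPoint_apply, hexDir]
  | one => simp [hexPoint_apply, hexDir]
  | more k ih₀ ih₁ =>
    have hrec := congrArg hexPoint (hexDir_add_hexDir_add_two k)
    rw [map_add] at hrec
    push_cast at ih₀ ih₁ ⊢
    linear_combination hrec - ih₀ + ih₁ - hexω ^ k * hexω_sq

lemma sum_range_natCast_zmod {M : Type*} [AddCommMonoid M] (n : ℕ) [NeZero n] (f : ZMod n → M) :
    ∑ k ∈ Finset.range n, f k = ∑ k, f k :=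
  Finset.sum_nbij' (fun k => (k : ZMod n)) ZMod.val (by simp) (by simp [ZMod.val_lt])
    (fun _ hk => ZMod.val_cast_of_lt (Finset.mem_range.1 hk)) (fun k _ => ZMod.natCast_zmod_val k)
    fun _ _ => rfl

/-- The angle sum of a label on the triangular lattice in coordinates. -/
noncomputable def coordAngleSum (r : ℤ × ℤ → ℝ) (v : ℤ × ℤ) : ℝ :=
  ∑ k, petalAngle (r v) (r (v + hexDir k)) (r (v + hexDir (k + 1)))

lemma hexAngleSum_hexPoint (ρ : ℂ → ℝ) (v : ℤ × ℤ) :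
    hexAngleSum ρ (hexPoint v) = coordAngleSum (ρ ∘ hexPoint) v := by
  have hnbr (k : ℕ) : hexPoint v + hexω ^ k = hexPoint (v + hexDir k) := by
    rw [map_add, hexPoint_hexDir]
  simp only [hexAngleSum, hnbr, Nat.cast_succ]
  exact sum_range_natCast_zmod 6 fun k => petalAngle (ρ (hexPoint v)) (ρ (hexPoint (v + hexDir k)))
    (ρ (hexPoint (v + hexDir (k + 1))))

end HexCoordinates

section HexConductance

variable (r s : ℤ × ℤ → ℝ)

/-- The conductance of the edge from `v` in direction `k`: the sum of `meanWeight` over the two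
triangles containing that edge. -/
noncomputable def hexConductance (v : ℤ × ℤ) (k : ZMod 6) : ℝ :=
  meanWeight r s v (v + hexDir k) (v + hexDir (k + 1)) +
    meanWeight r s v (v + hexDir k) (v + hexDir (k - 1))

lemma hexConductance_symm (v : ℤ × ℤ) (k : ZMod 6) :
    hexConductance r s (v + hexDir k) (k + 3) = hexConductance r s v k := by
  have hback : v + hexDir k + hexDir (k + 3) = v := by rw [hexDir_add_three, add_neg_cancel_right]
  have hleft : v + hexDir k + hexDir (k + 3 + 1) = v + hexDir (k - 1) := by
    rw [add_assoc, add_right_inj]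
    exact (by decide : ∀ k, hexDir k + hexDir (k + 3 + 1) = hexDir (k - 1)) k
  have hright : v + hexDir k + hexDir (k + 3 - 1) = v + hexDir (k + 1) := by
    rw [add_assoc, add_right_inj, ← hexDir_add_hexDir_add_two]
    ring_nf
  rw [hexConductance, hexConductance, hback, hleft, hright, add_comm,
    meanWeight_comm _ _ (v + hexDir k), meanWeight_comm _ _ (v + hexDir k)]

variable {r s}

lemma hexConductance_pos (hr : ∀ v, 0 < r v) (v : ℤ × ℤ) (k : ZMod 6) :
    0 < hexConductance r s v k :=
  add_pos (meanWeight_pos hr _ _ _) (meanWeight_pos hr _ _ _)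

lemma hexConductance_le_one (hr : ∀ v, 0 < r v) (v : ℤ × ℤ) (k : ZMod 6) :
    hexConductance r s v k ≤ 1 :=
  (add_le_add (meanWeight_le_half hr _ _ _) (meanWeight_le_half hr _ _ _)).trans_eq (add_halves 1)

lemma coordAngleSum_sub_coordAngleSum (hr : ∀ v, 0 < r v) (hs : ∀ v, 0 < s v) (v : ℤ × ℤ) :
    coordAngleSum s v - coordAngleSum r v =
      ∑ k, hexConductance r s v k *
        (log (s (v + hexDir k) / r (v + hexDir k)) - log (s v / r v)) := by
  have hshift := Equiv.sum_comp (Equiv.addRight 1) fun k =>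
    meanWeight r s v (v + hexDir k) (v + hexDir (k - 1)) *
      (log (s (v + hexDir k) / r (v + hexDir k)) - log (s v / r v))
  simp only [Equiv.coe_addRight, add_sub_cancel_right] at hshift
  simp only [coordAngleSum, ← Finset.sum_sub_distrib, petalAngle_sub_petalAngle hr hs,
    hexConductance, add_mul, Finset.sum_add_distrib, hshift]

/-- The network whose Laplacian, applied to `log (s / r)`, is the difference of the angle sums of
the labels `s` and `r`. -/
noncomputable def hexNetwork (hr : ∀ v, 0 < r v) (s : ℤ × ℤ → ℝ) : Network (ℤ × ℤ) :=
  .ofDirections hexDir (Equiv.addRight 3) hexDir_add_three (hexConductance r s)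
    (fun v k => (hexConductance_pos hr v k).le) (hexConductance_symm r s)

lemma laplacian_hexNetwork (hr : ∀ v, 0 < r v) (f : ℤ × ℤ → ℝ) (v : ℤ × ℤ) :
    (hexNetwork hr s).laplacian f v =
      ∑ k, hexConductance r s v k * (f (v + hexDir k) - f v) :=
  Network.laplacian_ofDirections f v

lemma hexNetwork_isRecurrent (hr : ∀ v, 0 < r v) (s : ℤ × ℤ → ℝ) :
    (hexNetwork hr s).IsRecurrent := by
  refine Network.isRecurrent_of_supDist_le_one (M := 6) (fun v u hvu => ?_) fun v B => ?_
  · obtain ⟨k, rfl⟩ := Network.exists_eq_add_of_ofDirections_cond_ne_zero hvu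
    simpa [supDist] using
      (by decide : ∀ k, max (hexDir k).1.natAbs (hexDir k).2.natAbs ≤ 1) k
  · refine (Network.sum_ofDirections_cond_le v B).trans ?_
    simpa using Finset.sum_le_card_nsmul Finset.univ _ 1 fun k _ => hexConductance_le_one hr v k

lemma eq_apply_zero_of_forall_add_hexDir {α : Type*} {f : ℤ × ℤ → α}
    (hf : ∀ v k, f (v + hexDir k) = f v) (v : ℤ × ℤ) : f v = f 0 := by
  have h₁ : Function.Periodic f (1, 0) := (hf · 0)
  have h₂ : Function.Periodic f (0, 1) := (hf · 1)
  calc f v = f (0 + v.1 • (1, 0) + v.2 • (0, 1)) := by simp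
    _ = f 0 := by rw [h₂.zsmul, h₁.zsmul]

theorem log_ratio_eq_of_coordAngleSum_le (hr : ∀ v, 0 < r v) (hs : ∀ v, 0 < s v)
    (hsum : ∀ v, coordAngleSum r v ≤ coordAngleSum s v) {M : ℝ}
    (hM : ∀ v, log (s v / r v) ≤ M) (v : ℤ × ℤ) : log (s v / r v) = log (s 0 / r 0) := by
  let w : ℤ × ℤ → ℝ := fun v => M + 1 - log (s v / r v)
  have hw (v) : 0 < w v := by linarith [hM v]
  have hsuper : (hexNetwork hr s).IsSuperharmonic w := fun v => by
    have hlap : (hexNetwork hr s).laplacian w v = coordAngleSum r v - coordAngleSum s v := by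
      rw [laplacian_hexNetwork, ← neg_sub (coordAngleSum s v),
        coordAngleSum_sub_coordAngleSum hr hs, ← Finset.sum_neg_distrib]
      exact Finset.sum_congr rfl fun k _ => by simp only [w]; ring
    linarith [hsum v]
  have hcond (v k) : (hexNetwork hr s).cond v (v + hexDir k) ≠ 0 :=
    ((hexConductance_pos hr v k).trans_le (Network.le_ofDirections_cond v k)).ne'
  have hconst := eq_apply_zero_of_forall_add_hexDir (fun v k =>
    (hexNetwork_isRecurrent hr s).eq_of_isSuperharmonic_of_pos hw hsuper (hcond v k)) v
  linarith

end HexConductance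

theorem hex_ratio_const_of_hexAngleSum_le {ρ σ : ℂ → ℝ} (hρ : ∀ v ∈ hexLattice, 0 < ρ v)
    (hσ : ∀ v ∈ hexLattice, 0 < σ v)
    (hΘ : ∀ v ∈ hexLattice, hexAngleSum ρ v ≤ hexAngleSum σ v)
    (hbdd : ∃ M : ℝ, ∀ v ∈ hexLattice, σ v / ρ v ≤ M) :
    ∃ c : ℝ, ∀ v ∈ hexLattice, σ v / ρ v = c := by
  obtain ⟨M, hM⟩ := hbdd
  simp only [forall_mem_hexLattice, hexAngleSum_hexPoint] at *
  have hratio (v) : 0 < σ (hexPoint v) / ρ (hexPoint v) := div_pos (hσ v) (hρ v)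
  refine ⟨σ (hexPoint 0) / ρ (hexPoint 0), fun v => log_injOn_pos (hratio v) (hratio 0) ?_⟩
  exact log_ratio_eq_of_coordAngleSum_le (r := ρ ∘ hexPoint) (s := σ ∘ hexPoint) hρ hσ hΘ
    (fun v => log_le_log (hratio v) (hM v)) v

lemma exists_forall_div_eq_comm {α K : Type*} [DivisionRing K] {S : Set α} {f g : α → K} :
    (∃ c, ∀ v ∈ S, f v / g v = c) ↔ ∃ c, ∀ v ∈ S, g v / f v = c := by
  refine inv_surjective.exists.trans (exists_congr fun c => forall₂_congr fun v _ => ?_)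
  rw [← inv_inj, inv_div, inv_inv]

/-- Corollary 3.2 for the hexagonal complex: if two positive labels `ρ` and
`σ` (the latter playing the role of `ρ̃`) have identical angle sum functions,
then either both ratio functions `σ/ρ` and `ρ/σ` are unbounded, or both are
constant. -/
theorem hex_equal_angle_sums_ratios_unbounded_or_const
    (ρ σ : ℂ → ℝ)
    (hρ : ∀ v ∈ hexLattice, 0 < ρ v)
    (hσ : ∀ v ∈ hexLattice, 0 < σ v)
    (hΘ : ∀ v ∈ hexLattice, hexAngleSum ρ v = hexAngleSum σ v) :
    (¬(∃ M : ℝ, ∀ v ∈ hexLattice, σ v / ρ v ≤ M) ∧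
       ¬(∃ M : ℝ, ∀ v ∈ hexLattice, ρ v / σ v ≤ M)) ∨
    ((∃ c : ℝ, ∀ v ∈ hexLattice, σ v / ρ v = c) ∧
       (∃ c : ℝ, ∀ v ∈ hexLattice, ρ v / σ v = c)) := by
  by_cases hσρ : ∃ M : ℝ, ∀ v ∈ hexLattice, σ v / ρ v ≤ M
  · have hconst := hex_ratio_const_of_hexAngleSum_le hρ hσ (fun v hv => (hΘ v hv).le) hσρ
    exact .inr ⟨hconst, exists_forall_div_eq_comm.1 hconst⟩
  by_cases hρσ : ∃ M : ℝ, ∀ v ∈ hexLattice, ρ v / σ v ≤ M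
  · have hconst := hex_ratio_const_of_hexAngleSum_le hσ hρ (fun v hv => (hΘ v hv).ge) hρσ
    exact .inr ⟨exists_forall_div_eq_comm.1 hconst, hconst⟩
  exact .inl ⟨hσρ, hρσ⟩
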